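/- Consider the labeled stochastic block model 𝒢(n, a/n, b/n, μ, ν) with true type assignment σ*, n even, and a weight function w : 𝓛 → [−1,1]. Assume the technical conditions Σ_ℓ a·μ(ℓ)·w(ℓ)² > 8·ln 2 and Σ_ℓ b·ν(ℓ)·w(ℓ)² > 8·ln 2, and assume Σ_ℓ (a·μ(ℓ) − b·ν(ℓ))·w(ℓ) / √(Σ_ℓ (a·μ(ℓ) + b·ν(ℓ))·w(ℓ)²) > √(128·ln 2). Then asymptotically almost surely every minimizer σ̂ of the weighted minimum bisection — that is, every σ̂ ∈ {±1}^n with Σ_u σ̂_u = 0 minimizing Σ_{(u,v): σ̂_u ≠ σ̂_v} W_{uv} over all balanced assignments — satisfies Q(σ*, σ̂) > 0. -/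

import Mathlib

open Finset Filter Real

namespace LSBM

/-- Ordered pairs `u < v` of vertices. -/
abbrev Pairs (n : ℕ) := {p : Fin n × Fin n // p.1 < p.2}

/-- A labeled-graph configuration: each pair `u < v` carries `none` (no edge)
or `some ℓ` (an edge with label `ℓ`). -/
abbrev EdgeConf (n : ℕ) (L : Type*) := Pairs n → Option L

variable {L : Type*}

/-- The label (if any) on the edge between `u` and `v`. -/
def getLabel {n : ℕ} (E : EdgeConf n L) (u v : Fin n) : Option L :=
  if h : u < v then E ⟨(u, v), h⟩ else if h' : v < u then E ⟨(v, u), h'⟩ else none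

/-- Per-pair mass under the labeled stochastic block model. -/
noncomputable def sbmPairMass (n : ℕ) (a b : ℝ) (μ ν : L → ℝ) (same : Bool) : Option L → ℝ
  | none => if same then 1 - a / n else 1 - b / n
  | some ℓ => if same then (a / n) * μ ℓ else (b / n) * ν ℓ

/-- Joint mass of a (type assignment, labeled graph) outcome under the labeled SBM. -/
noncomputable def sbmMass (n : ℕ) (a b : ℝ) (μ ν : L → ℝ)
    (x : (Fin n → Bool) × EdgeConf n L) : ℝ :=
  (1 / 2 : ℝ) ^ n *
    ∏ p : Pairs n, sbmPairMass n a b μ ν (x.1 p.1.1 == x.1 p.1.2) (x.2 p)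

/-- Probability of an event under the labeled SBM (joint in types and graph). -/
noncomputable def sbmProb [Fintype L] (n : ℕ) (a b : ℝ) (μ ν : L → ℝ)
    (A : Set ((Fin n → Bool) × EdgeConf n L)) : ℝ :=
  ∑ x : (Fin n → Bool) × EdgeConf n L, A.indicator (sbmMass n a b μ ν) x

/-- Probability of a labeled-graph event under the labeled SBM (marginal over types). -/
noncomputable def sbmGraphProb [Fintype L] (n : ℕ) (a b : ℝ) (μ ν : L → ℝ)
    (A : Set (EdgeConf n L)) : ℝ :=
  sbmProb n a b μ ν {x | x.2 ∈ A}

/-- Conditional (given the type assignment `σ`) probability of a labeled-graph event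
under the labeled SBM. -/
noncomputable def sbmCondProb [Fintype L] (n : ℕ) (a b : ℝ) (μ ν : L → ℝ)
    (σ : Fin n → Bool) (A : Set (EdgeConf n L)) : ℝ :=
  ∑ E : EdgeConf n L, A.indicator
    (fun E' => ∏ p : Pairs n, sbmPairMass n a b μ ν (σ p.1.1 == σ p.1.2) (E' p)) E

/-- Conditional (given `σ`) expectation of a function of the labeled graph. -/
noncomputable def sbmCondExp [Fintype L] (n : ℕ) (a b : ℝ) (μ ν : L → ℝ)
    (σ : Fin n → Bool) (f : EdgeConf n L → ℝ) : ℝ :=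
  ∑ E : EdgeConf n L,
    (∏ p : Pairs n, sbmPairMass n a b μ ν (σ p.1.1 == σ p.1.2) (E p)) * f E

/-- Per-pair mass under the labeled Erdős–Rényi model. -/
noncomputable def erPairMass (n : ℕ) (a b : ℝ) (μ ν : L → ℝ) : Option L → ℝ
  | none => 1 - (a + b) / (2 * n)
  | some ℓ => ((a + b) / (2 * n)) * ((a * μ ℓ + b * ν ℓ) / (a + b))

/-- Mass of a labeled graph under the labeled Erdős–Rényi model. -/
noncomputable def erMass [Fintype L] (n : ℕ) (a b : ℝ) (μ ν : L → ℝ) (E : EdgeConf n L) : ℝ :=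
  ∏ p : Pairs n, erPairMass n a b μ ν (E p)

/-- Probability of a labeled-graph event under the labeled Erdős–Rényi model. -/
noncomputable def erProb [Fintype L] (n : ℕ) (a b : ℝ) (μ ν : L → ℝ)
    (A : Set (EdgeConf n L)) : ℝ :=
  ∑ E : EdgeConf n L, A.indicator (erMass n a b μ ν) E

/-- Expectation of a function of the labeled graph under the labeled Erdős–Rényi model. -/
noncomputable def erExp [Fintype L] (n : ℕ) (a b : ℝ) (μ ν : L → ℝ)
    (f : EdgeConf n L → ℝ) : ℝ :=
  ∑ E : EdgeConf n L, erMass n a b μ ν E * f E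

/-- `μ` is a probability distribution on the (finite) label set. -/
def IsProbVec [Fintype L] (μ : L → ℝ) : Prop := (∀ ℓ, 0 ≤ μ ℓ) ∧ ∑ ℓ, μ ℓ = 1

/-- The reconstruction-threshold parameter `τ`. -/
noncomputable def tau [Fintype L] (a b : ℝ) (μ ν : L → ℝ) : ℝ :=
  ∑ ℓ, (a * μ ℓ - b * ν ℓ) ^ 2 / (2 * (a * μ ℓ + b * ν ℓ))

/-- The weighted adjacency matrix `W` with `W u v = A u v * w (L u v)`. -/
def Wmat {n : ℕ} (w : L → ℝ) (E : EdgeConf n L) : Matrix (Fin n) (Fin n) ℝ :=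
  fun u v => match getLabel E u v with
    | none => 0
    | some ℓ => w ℓ

/-- The ±1 vector associated with a Boolean type assignment (`true ↦ +1`). -/
def signVec {n : ℕ} (σ : Fin n → Bool) : Fin n → ℝ := fun u => if σ u then 1 else -1

/-- `x` is a vector with entries in `{±1}`. -/
def IsSignVec {n : ℕ} (x : Fin n → ℝ) : Prop := ∀ u, x u = 1 ∨ x u = -1

/-- Componentwise sign of a real vector. -/
noncomputable def signR {n : ℕ} (x : Fin n → ℝ) : Fin n → ℝ :=
  fun u => if 0 ≤ x u then 1 else -1

open Classical in
/-- Hamming distance between two vectors. -/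
noncomputable def hamming {n : ℕ} (x y : Fin n → ℝ) : ℕ :=
  (univ.filter fun u => x u ≠ y u).card

/-- The overlap `Q(x, y) = 1/2 - (1/n) min(d(x,y), d(x,-y))`. -/
noncomputable def overlap (n : ℕ) (x y : Fin n → ℝ) : ℝ :=
  1 / 2 - (1 / n) * min (hamming x y : ℝ) (hamming x (-y) : ℝ)

open Classical in
/-- The weight of the cut induced by a ±1 assignment `σ`:
`∑_{(u,v) : u < v, σ_u ≠ σ_v} W_{uv}`. -/
noncomputable def cutWeight {n : ℕ} (w : L → ℝ) (E : EdgeConf n L) (σ : Fin n → ℝ) : ℝ :=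
  ∑ p : Pairs n, if σ p.1.1 ≠ σ p.1.2 then Wmat w E p.1.1 p.1.2 else 0

/-- The quadratic form `xᵀ M x`. -/
def quadForm {n : ℕ} (M : Matrix (Fin n) (Fin n) ℝ) (x : Fin n → ℝ) : ℝ :=
  ∑ u, ∑ v, x u * M u v * x v

/-- The entrywise inner product `⟨A, B⟩ = ∑_{u,v} A u v * B u v`. -/
def mInner {n : ℕ} (A B : Matrix (Fin n) (Fin n) ℝ) : ℝ :=
  ∑ u, ∑ v, A u v * B u v

/-- The degree of a vertex. -/
def degree {n : ℕ} (E : EdgeConf n L) (u : Fin n) : ℕ :=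
  (univ.filter fun v => (getLabel E u v).isSome).card

open Classical in
/-- The weighted adjacency matrix of the graph obtained by removing all edges incident
to vertices of degree larger than `(3/2)·(a+b)/2`. -/
noncomputable def prunedW {n : ℕ} (a b : ℝ) (w : L → ℝ) (E : EdgeConf n L) :
    Matrix (Fin n) (Fin n) ℝ :=
  fun u v =>
    if (degree E u : ℝ) ≤ (3 / 2) * ((a + b) / 2) ∧
       (degree E v : ℝ) ≤ (3 / 2) * ((a + b) / 2)
    then Wmat w E u v else 0

/-- The conditional (given `σ`) entrywise expectation `E[W | σ]` of the weighted
adjacency matrix. -/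
noncomputable def condEW {n : ℕ} [Fintype L] (a b : ℝ) (μ ν w : L → ℝ)
    (σ : Fin n → Bool) : Matrix (Fin n) (Fin n) ℝ :=
  fun u v =>
    if u = v then 0
    else if σ u = σ v then (a / n) * ∑ ℓ, μ ℓ * w ℓ
    else (b / n) * ∑ ℓ, ν ℓ * w ℓ

/-- The matrix `D' = W' - (α/n) J` used in the spectral method, where
`α = (1/2)·∑_ℓ w(ℓ)(aμ(ℓ)+bν(ℓ))` and `J` is the all-one matrix. -/
noncomputable def Dmat {n : ℕ} [Fintype L] (a b : ℝ) (μ ν w : L → ℝ)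
    (E : EdgeConf n L) : Matrix (Fin n) (Fin n) ℝ :=
  fun u v => prunedW a b w E u v - ((1 / 2) * ∑ ℓ, w ℓ * (a * μ ℓ + b * ν ℓ)) / n

/-- The spectral norm (ℓ²-operator norm) of a real square matrix. -/
noncomputable def specNorm {n : ℕ} (M : Matrix (Fin n) (Fin n) ℝ) : ℝ :=
  ‖Matrix.toEuclideanCLM (𝕜 := ℝ) M‖

/-- The number of `k`-cycles carrying the label sequence `ℓ`, in the canonical
orientation: starting from the minimal-index vertex of the cycle toward its
neighbor of smaller index. -/
def cycleCount [DecidableEq L] (n k : ℕ) (E : EdgeConf n L) (ℓ : Fin k → L) : ℕ :=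
  if hk : 0 < k then
    haveI : NeZero k := ⟨hk.ne'⟩
    (univ.filter fun c : Fin k → Fin n =>
      Function.Injective c ∧ (∀ i, c 0 ≤ c i) ∧
      c 1 < c ⟨k - 1, Nat.sub_lt hk one_pos⟩ ∧
      ∀ i : Fin k, getLabel E (c i) (c (i + 1)) = some (ℓ i)).card
  else 0

/-- The Poisson probability mass function. -/
noncomputable def poissonPMF (m : ℝ) (j : ℕ) : ℝ :=
  Real.exp (-m) * m ^ j / (Nat.factorial j)

/-- The mean cycle count `λ([ℓ]_k)` under the labeled Erdős–Rényi model. -/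
noncomputable def lamER [Fintype L] (a b : ℝ) (μ ν : L → ℝ) {k : ℕ} (ℓ : Fin k → L) : ℝ :=
  (1 / ((2 : ℝ) ^ (k + 1) * k)) * ∏ i, (a * μ (ℓ i) + b * ν (ℓ i))

/-- The mean cycle count `ξ([ℓ]_k)` under the labeled SBM. -/
noncomputable def xiSBM [Fintype L] (a b : ℝ) (μ ν : L → ℝ) {k : ℕ} (ℓ : Fin k → L) : ℝ :=
  (1 / ((2 : ℝ) ^ (k + 1) * k)) *
    (∏ i, (a * μ (ℓ i) + b * ν (ℓ i)) + ∏ i, (a * μ (ℓ i) - b * ν (ℓ i)))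

/-- The per-pair likelihood-ratio factor `W_{uv}(G, L, σ)` (SBM versus labeled
Erdős–Rényi), as a function of the pair status (`same` type or not) and the
edge/label information on the pair. -/
noncomputable def likPair (n : ℕ) (a b : ℝ) (μ ν : L → ℝ) (same : Bool) :
    Option L → ℝ
  | some ℓ =>
      if same then 2 * a * μ ℓ / (a * μ ℓ + b * ν ℓ)
      else 2 * b * ν ℓ / (a * μ ℓ + b * ν ℓ)
  | none =>
      if same then (1 - a / n) / (1 - (a + b) / (2 * n))
      else (1 - b / n) / (1 - (a + b) / (2 * n))

/-- The likelihood ratio `Y_n = ℙ_n / ℙ'_n` of the labeled SBM with respect to the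
labeled Erdős–Rényi model. -/
noncomputable def Ylik [Fintype L] (n : ℕ) (a b : ℝ) (μ ν : L → ℝ)
    (E : EdgeConf n L) : ℝ :=
  (1 / 2 : ℝ) ^ n * ∑ σ : Fin n → Bool,
    ∏ p : Pairs n, likPair n a b μ ν (σ p.1.1 == σ p.1.2) (E p)

/-! Compare a minimum bisection with a bisection `t` that follows the true types as closely as
balancedness allows. Given the types `σ`, let `h` be a bisection orthogonal to `σ`. As `t` and `h`
are both balanced, the mean of `cutWeight t - cutWeight h` only involves the difference between
equal and opposite types, and it is close to `-n Δ / 8` with `Δ = ∑ (a μ - b ν) w`. The edges are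
independent given `σ` and `exp x ≤ 1 + x + x ^ 2` for `|x| ≤ 1`, so for `0 ≤ λ ≤ 1` a Chernoff bound
shows that `h` beats `t` with probability at most about `exp (n (λ ^ 2 S / 4 - λ Δ / 8))`, where
`S = ∑ (a μ + b ν) w ^ 2`. Taking `λ = √(4 log 2 / S)`, this is exponentially smaller than the
number `2 ^ n` of candidates `h`, so a union bound applies. A minimum bisection therefore has a
nonzero inner product with the true types, which is what positive overlap means. -/

section SignVectors

variable {n : ℕ} {s x y : Fin n → ℝ}

lemma isSignVec_signVec (σ : Fin n → Bool) : IsSignVec (signVec σ) := fun u => by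
  cases h : σ u <;> simp [signVec, h]

lemma IsSignVec.mul (hx : IsSignVec x) (hy : IsSignVec y) : IsSignVec (x * y) := fun u => by
  rcases hx u with h | h <;> rcases hy u with h' | h' <;> simp [h, h']

lemma IsSignVec.neg (hx : IsSignVec x) : IsSignVec (-x) := fun u => by
  rcases hx u with h | h <;> simp [h]

lemma IsSignVec.sq_eq_one (hx : IsSignVec x) (u : Fin n) : x u ^ 2 = 1 := by
  rcases hx u with h | h <;> simp [h]

lemma IsSignVec.exists_signVec_eq (hx : IsSignVec x) : ∃ σ, signVec σ = x := by
  refine ⟨fun u => decide (x u = 1), funext fun u => ?_⟩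
  rcases hx u with h | h <;> norm_num [signVec, h]

lemma two_mul_sum_sum_Ioi_mul {ι R : Type*} [Fintype ι] [LinearOrder ι] [LocallyFiniteOrderTop ι]
    [LocallyFiniteOrderBot ι] [CommRing R] (x : ι → R) :
    2 * ∑ i, ∑ j ∈ Ioi i, x i * x j = (∑ i, x i) ^ 2 - ∑ i, x i ^ 2 := by
  have off_diag (i : ι) : ∑ j ∈ {i}ᶜ, x j * x i = (∑ j, x j) * x i - x i ^ 2 := by
    rw [← sum_mul, ← sum_compl_add_sum {i} x, sum_singleton]
    ring
  calc 2 * ∑ i, ∑ j ∈ Ioi i, x i * x j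
      = ∑ i, ∑ j ∈ Ioi i, (x j * x i + x i * x j) := by
        simp_rw [mul_comm (x _) (x _), ← two_mul, ← mul_sum]
    _ = ∑ i, ∑ j ∈ {i}ᶜ, x j * x i := sum_sum_Ioi_add_eq_sum_sum_off_diag fun i j => x i * x j
    _ = (∑ i, x i) ^ 2 - ∑ i, x i ^ 2 := by
        simp_rw [off_diag, sum_sub_distrib, ← mul_sum, sq]

lemma sum_pairs_eq_sum_sum_Ioi {M : Type*} [AddCommMonoid M] (f : Fin n → Fin n → M) :
    ∑ p : Pairs n, f p.1.1 p.1.2 = ∑ u, ∑ v ∈ Ioi u, f u v := by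
  rw [sum_sigma']
  exact sum_bij' (fun p _ => ⟨p.1.1, p.1.2⟩) (fun q hq => ⟨(q.1, q.2), by simpa using hq⟩)
    (by simp) (by simp) (by simp) (by simp) (by simp)

lemma IsSignVec.sum_pairs_mul (hx : IsSignVec x) :
    ∑ p : Pairs n, x p.1.1 * x p.1.2 = ((∑ u, x u) ^ 2 - n) / 2 := by
  have h := two_mul_sum_sum_Ioi_mul x
  simp only [hx.sq_eq_one, sum_const, card_univ, Fintype.card_fin, nsmul_eq_mul, mul_one] at h
  rw [sum_pairs_eq_sum_sum_Ioi fun u v => x u * x v]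
  linarith

lemma sum_signVec_mul_signVec {u v : Fin n} (huv : u ≠ v) :
    ∑ σ : Fin n → Bool, signVec σ u * signVec σ v = 0 := by
  refine sum_involution (fun σ _ => Function.update σ u (!σ u)) (fun σ _ => ?_) (fun σ _ _ h => ?_)
    (fun _ _ => mem_univ _) (fun σ _ => by simp)
  · cases h : σ u <;> cases h' : σ v <;> simp [signVec, huv.symm, h, h']
  · simpa using congrFun h u

lemma sum_sq_sum_signVec (n : ℕ) :
    ∑ σ : Fin n → Bool, (∑ u, signVec σ u) ^ 2 = n * 2 ^ n := by
  have orthogonal : ∀ u v : Fin n, ∑ σ : Fin n → Bool, signVec σ u * signVec σ v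
      = if u = v then 2 ^ n else 0 := fun u v => by
    split_ifs with huv
    · simp [huv, ← sq, (isSignVec_signVec _).sq_eq_one]
    · exact sum_signVec_mul_signVec huv
  simp_rw [sq, sum_mul_sum]
  rw [sum_comm]
  simp_rw [sum_comm (s := (univ : Finset (Fin n → Bool))), orthogonal]
  simp

lemma IsSignVec.hamming_eq (hx : IsSignVec x) (hy : IsSignVec y) :
    (hamming x y : ℝ) = (n - ∑ u, x u * y u) / 2 := by
  have pointwise (u : Fin n) : (if x u ≠ y u then (1 : ℝ) else 0) = (1 - x u * y u) / 2 := by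
    rcases hx u with h | h <;> rcases hy u with h' | h' <;> norm_num [h, h']
  rw [hamming, card_filter]
  push_cast
  simp_rw [pointwise, ← sum_div]
  simp

lemma IsSignVec.overlap_eq (hn : 0 < n) (hx : IsSignVec x) (hy : IsSignVec y) :
    overlap n x y = |∑ u, x u * y u| / (2 * n) := by
  have hneg := hx.hamming_eq hy.neg
  simp only [Pi.neg_apply, mul_neg, sum_neg_distrib, sub_neg_eq_add] at hneg
  rw [overlap, hx.hamming_eq hy, hneg, min_div_div_right zero_le_two]
  rcases le_total 0 (∑ u, x u * y u) with h | h
  · rw [abs_of_nonneg h, min_eq_left (by linarith)]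
    field
  · rw [abs_of_nonpos h, min_eq_right (by linarith)]
    field

lemma IsSignVec.overlap_pos_iff (hn : 0 < n) (hx : IsSignVec x) (hy : IsSignVec y) :
    0 < overlap n x y ↔ ∑ u, y u * x u ≠ 0 := by
  have hn' : (0 : ℝ) < 2 * n := by positivity
  simp_rw [hx.overlap_eq hn hy, div_pos_iff_of_pos_right hn', abs_pos, mul_comm]

end SignVectors

section Bisections

variable {n : ℕ} {s : Fin n → ℝ}

/-- The balanced `±1` assignments, over which the cut weight is minimized. -/
def IsBisection (x : Fin n → ℝ) : Prop := IsSignVec x ∧ ∑ u, x u = 0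

/-- The minimizers of the weighted minimum bisection problem of the labeled graph `E`. -/
def IsMinBisection {L : Type*} (w : L → ℝ) (E : EdgeConf n L) (x : Fin n → ℝ) : Prop :=
  IsBisection x ∧ ∀ y, IsBisection y → cutWeight w E x ≤ cutWeight w E y

lemma IsBisection.neg {x : Fin n → ℝ} (hx : IsBisection x) : IsBisection (-x) :=
  ⟨hx.1.neg, by simp [hx.2]⟩

lemma sum_ite_mem_one_neg_one (T : Finset (Fin n)) :
    ∑ u, (if u ∈ T then 1 else -1 : ℝ) = 2 * #T - n := by
  have h (u : Fin n) : (if u ∈ T then 1 else -1 : ℝ) = 2 * (if u ∈ T then 1 else 0) - 1 := by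
    split_ifs <;> norm_num
  simp_rw [h, sum_sub_distrib, ← mul_sum]
  simp

lemma IsSignVec.exists_isBisection_le (hn : Even n) (hs : IsSignVec s) (h : 0 ≤ ∑ u, s u) :
    ∃ t, IsBisection t ∧ ∀ u, t u ≤ s u := by
  obtain ⟨m, rfl⟩ := hn
  let P : Finset (Fin (m + m)) := {u | s u = 1}
  have s_eq (u : Fin (m + m)) : s u = if u ∈ P then 1 else -1 := by
    rcases hs u with h | h <;> norm_num [P, h]
  have card_P : m ≤ #P := by
    simp_rw [s_eq, sum_ite_mem_one_neg_one] at h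
    push_cast at h
    exact_mod_cast (by linarith : (m : ℝ) ≤ #P)
  obtain ⟨T, hTP, hT⟩ := exists_subset_card_eq card_P
  refine ⟨fun u => if u ∈ T then 1 else -1, ⟨fun u => ite_eq_or_eq _ _ _, ?_⟩, fun u => ?_⟩
  · rw [sum_ite_mem_one_neg_one, hT]; push_cast; ring
  · rw [s_eq]
    by_cases hu : u ∈ T
    · simp [hu, hTP hu]
    · simp only [hu, if_false]
      split_ifs <;> norm_num

lemma IsSignVec.exists_isBisection_sub_abs_sum_le (hn : Even n) (hs : IsSignVec s) :
    ∃ t, IsBisection t ∧ n - |∑ u, s u| ≤ ∑ u, t u * s u := by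
  wlog h : 0 ≤ ∑ u, s u generalizing s
  · obtain ⟨t, ht, hts⟩ := this hs.neg (by simpa using (not_le.1 h).le)
    exact ⟨-t, ht.neg, by simpa using hts⟩
  obtain ⟨t, ht, hts⟩ := hs.exists_isBisection_le hn h
  refine ⟨t, ht, ?_⟩
  have pointwise (u : Fin n) : t u * s u = 1 - s u + t u := by
    have htu := hts u
    rcases ht.1 u with h | h <;> rcases hs u with h' | h' <;> rw [h, h'] at htu ⊢ <;> linarith
  simp [pointwise, sum_add_distrib, sum_sub_distrib, ht.2, abs_of_nonneg h]

lemma cutWeight_eq_sum {L : Type*} (w : L → ℝ) (E : EdgeConf n L) {x : Fin n → ℝ}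
    (hx : IsSignVec x) :
    cutWeight w E x = ∑ p : Pairs n, (1 - x p.1.1 * x p.1.2) / 2 * (E p).elim 0 w := by
  refine sum_congr rfl fun p _ => ?_
  have Wmat_eq : Wmat w E p.1.1 p.1.2 = (E p).elim 0 w := by
    simp only [Wmat, getLabel, p.2, dif_pos]
    cases E p <;> rfl
  rw [Wmat_eq]
  rcases hx p.1.1 with h | h <;> rcases hx p.1.2 with h' | h' <;> norm_num [h, h']

end Bisections

section Probability

variable [Fintype L] {n : ℕ} {a b : ℝ} {μ ν : L → ℝ}

/-- The conditions on the parameters under which the labeled stochastic block model on `n` vertices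
is a probability distribution: for `n > 0`, `a / n` and `b / n` are then edge probabilities. -/
structure IsModel (n : ℕ) (a b : ℝ) (μ ν : L → ℝ) : Prop where
  intra_nonneg : 0 ≤ a
  intra_le : a ≤ n
  inter_nonneg : 0 ≤ b
  inter_le : b ≤ n
  intra_label : IsProbVec μ
  inter_label : IsProbVec ν

lemma IsModel.sbmPairMass_nonneg (h : IsModel n a b μ ν) (same : Bool) (o : Option L) :
    0 ≤ sbmPairMass n a b μ ν same o := by
  have ha := div_le_one_of_le₀ h.intra_le n.cast_nonneg
  have hb := div_le_one_of_le₀ h.inter_le n.cast_nonneg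
  have ha₀ := h.intra_nonneg
  have hb₀ := h.inter_nonneg
  rcases o with _ | ℓ
  · cases same <;> simpa [sbmPairMass]
  · have hμ := h.intra_label.1 ℓ
    have hν := h.inter_label.1 ℓ
    cases same <;> simp only [sbmPairMass] <;> positivity

lemma sum_sbmPairMass (hμ : IsProbVec μ) (hν : IsProbVec ν) (same : Bool) :
    ∑ o, sbmPairMass n a b μ ν same o = 1 := by
  cases same <;> simp [Fintype.sum_option, sbmPairMass, ← mul_sum, hμ.2, hν.2]

lemma sbmCondExp_prod (σ : Fin n → Bool) (f : Pairs n → Option L → ℝ) :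
    sbmCondExp n a b μ ν σ (fun E => ∏ p, f p (E p)) =
      ∏ p : Pairs n, ∑ o, sbmPairMass n a b μ ν (σ p.1.1 == σ p.1.2) o * f p o := by
  classical
  rw [prod_univ_sum, Fintype.piFinset_univ]
  exact sum_congr rfl fun E _ => prod_mul_distrib.symm

lemma sbmCondExp_one (hμ : IsProbVec μ) (hν : IsProbVec ν) (σ : Fin n → Bool) :
    sbmCondExp n a b μ ν σ (fun _ => 1) = 1 := by
  simpa [sum_sbmPairMass hμ hν] using
    sbmCondExp_prod (a := a) (b := b) (μ := μ) (ν := ν) σ fun _ _ => 1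

lemma sbmCondExp_sum {ι : Type*} (σ : Fin n → Bool) (I : Finset ι) (f : ι → EdgeConf n L → ℝ) :
    sbmCondExp n a b μ ν σ (fun E => ∑ i ∈ I, f i E) = ∑ i ∈ I, sbmCondExp n a b μ ν σ (f i) := by
  simp only [sbmCondExp, mul_sum]
  exact sum_comm

lemma IsModel.sbmCondProb_le_sbmCondExp (h : IsModel n a b μ ν) (σ : Fin n → Bool)
    {A : Set (EdgeConf n L)} {f : EdgeConf n L → ℝ} (hf : ∀ E, 0 ≤ f E) (hA : ∀ E ∈ A, 1 ≤ f E) :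
    sbmCondProb n a b μ ν σ A ≤ sbmCondExp n a b μ ν σ f := by
  refine sum_le_sum fun E _ => ?_
  have mass_nonneg := prod_nonneg fun p (_ : p ∈ univ) =>
    h.sbmPairMass_nonneg (σ p.1.1 == σ p.1.2) (E p)
  exact Set.indicator_apply_le' (fun hE => le_mul_of_one_le_right mass_nonneg (hA E hE))
    fun _ => mul_nonneg mass_nonneg (hf E)

lemma IsModel.sbmCondProb_le_one (h : IsModel n a b μ ν) (σ : Fin n → Bool)
    (A : Set (EdgeConf n L)) : sbmCondProb n a b μ ν σ A ≤ 1 :=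
  (h.sbmCondProb_le_sbmCondExp σ (fun _ => zero_le_one) fun _ _ => le_rfl).trans_eq
    (sbmCondExp_one h.intra_label h.inter_label σ)

lemma sbmProb_eq_sum_sbmCondProb (A : Set ((Fin n → Bool) × EdgeConf n L)) :
    sbmProb n a b μ ν A =
      (1 / 2) ^ n * ∑ σ, sbmCondProb n a b μ ν σ {E | (σ, E) ∈ A} := by
  classical
  simp only [sbmProb, sbmCondProb, Fintype.sum_prod_type, mul_sum]
  refine sum_congr rfl fun σ _ => sum_congr rfl fun E _ => ?_
  simp [Set.indicator_apply, sbmMass]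

lemma IsModel.sbmProb_nonneg (h : IsModel n a b μ ν) (A : Set ((Fin n → Bool) × EdgeConf n L)) :
    0 ≤ sbmProb n a b μ ν A :=
  sum_nonneg fun _ _ => Set.indicator_nonneg (fun _ _ => mul_nonneg (by positivity)
    (prod_nonneg fun _ _ => h.sbmPairMass_nonneg _ _)) _

lemma sum_sbmMass (hμ : IsProbVec μ) (hν : IsProbVec ν) :
    ∑ x : (Fin n → Bool) × EdgeConf n L, sbmMass n a b μ ν x = 1 := by
  have := fun σ : Fin n → Bool => sbmCondExp_one (a := a) (b := b) hμ hν σ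
  simp only [sbmCondExp, mul_one] at this
  simp [Fintype.sum_prod_type, sbmMass, ← mul_sum, this]

lemma sbmProb_eq_one_sub_compl (hμ : IsProbVec μ) (hν : IsProbVec ν)
    (A : Set ((Fin n → Bool) × EdgeConf n L)) :
    sbmProb n a b μ ν A = 1 - sbmProb n a b μ ν Aᶜ := by
  rw [eq_sub_iff_add_eq, sbmProb, sbmProb, ← sum_add_distrib, ← sum_sbmMass hμ hν]
  exact sum_congr rfl fun x _ => congrFun (Set.indicator_self_add_compl A _) x

/-- Chebyshev's inequality makes the contribution of unbalanced type assignments small. -/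
lemma IsModel.sbmProb_le_of_sbmCondProb_le (h : IsModel n a b μ ν) (hn : 0 < n) {ε q : ℝ}
    (hε : 0 < ε) (hq : 0 ≤ q) {A : Set ((Fin n → Bool) × EdgeConf n L)}
    (hA : ∀ σ : Fin n → Bool, |∑ u, signVec σ u| ≤ ε * n →
      sbmCondProb n a b μ ν σ {E | (σ, E) ∈ A} ≤ q) :
    sbmProb n a b μ ν A ≤ 1 / (ε ^ 2 * n) + q := by
  have : (0 : ℝ) < n := Nat.cast_pos.2 hn
  have condProb_le : ∀ σ : Fin n → Bool, sbmCondProb n a b μ ν σ {E | (σ, E) ∈ A}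
      ≤ (∑ u, signVec σ u) ^ 2 / (ε * n) ^ 2 + q := fun σ => by
    rcases le_or_gt |∑ u, signVec σ u| (ε * n) with hσ | hσ
    · exact (hA σ hσ).trans (le_add_of_nonneg_left (by positivity))
    · have : 1 ≤ (∑ u, signVec σ u) ^ 2 / (ε * n) ^ 2 := by
        rw [one_le_div (by positivity), ← sq_abs (∑ u, signVec σ u)]
        gcongr
      linarith [h.sbmCondProb_le_one σ {E | (σ, E) ∈ A}]
  calc sbmProb n a b μ ν A
      ≤ (1 / 2) ^ n * ∑ σ : Fin n → Bool, ((∑ u, signVec σ u) ^ 2 / (ε * n) ^ 2 + q) := by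
        rw [sbmProb_eq_sum_sbmCondProb]
        gcongr with σ
        exact condProb_le σ
    _ = (1 / 2) ^ n * (n * 2 ^ n / (ε * n) ^ 2 + 2 ^ n * q) := by
        simp [sum_add_distrib, ← sum_div, sum_sq_sum_signVec]
    _ = 1 / (ε ^ 2 * n) + q := by
        rw [one_div_pow]; field_simp

end Probability

section ExponentialMoments

variable [Fintype L] {n : ℕ} {a b : ℝ} {μ ν : L → ℝ}

/-- The functional `f ↦ ∑_ℓ (a μ(ℓ) + b ν(ℓ)) f(ℓ)`; the noise level of the weights `w` is its
value at `w ^ 2`. -/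
def rateSum (a b : ℝ) (μ ν : L → ℝ) (f : L → ℝ) : ℝ := ∑ ℓ, (a * μ ℓ + b * ν ℓ) * f ℓ

/-- The functional `f ↦ ∑_ℓ (a μ(ℓ) - b ν(ℓ)) f(ℓ)`, which measures how well `f` separates edges
between equal types from edges between opposite types. -/
def rateDiff (a b : ℝ) (μ ν : L → ℝ) (f : L → ℝ) : ℝ := ∑ ℓ, (a * μ ℓ - b * ν ℓ) * f ℓ

/-- `n` times the expectation of the label statistic `f`, summed over the possible edge, of a pair
whose types are equal if `same` and opposite otherwise. -/
def pairRate (a b : ℝ) (μ ν : L → ℝ) (f : L → ℝ) (same : Bool) : ℝ :=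
  if same then a * ∑ ℓ, μ ℓ * f ℓ else b * ∑ ℓ, ν ℓ * f ℓ

lemma pairRate_beq (f : L → ℝ) (σ : Fin n → Bool) (u v : Fin n) :
    pairRate a b μ ν f (σ u == σ v) =
      (rateSum a b μ ν f + rateDiff a b μ ν f * (signVec σ u * signVec σ v)) / 2 := by
  simp only [rateSum, rateDiff, pairRate, signVec, add_mul, sub_mul, sum_add_distrib,
    sum_sub_distrib, mul_assoc, ← mul_sum]
  cases σ u <;> cases σ v <;>
    simp only [BEq.rfl, beq_true, beq_false, Bool.not_true, Bool.false_eq_true, ↓reduceIte] <;> ring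

lemma pairRate_nonneg (ha : 0 ≤ a) (hb : 0 ≤ b) (hμ : ∀ ℓ, 0 ≤ μ ℓ) (hν : ∀ ℓ, 0 ≤ ν ℓ)
    {f : L → ℝ} (hf : ∀ ℓ, 0 ≤ f ℓ) (same : Bool) : 0 ≤ pairRate a b μ ν f same := by
  have hμf := sum_nonneg fun ℓ (_ : ℓ ∈ univ) => mul_nonneg (hμ ℓ) (hf ℓ)
  have hνf := sum_nonneg fun ℓ (_ : ℓ ∈ univ) => mul_nonneg (hν ℓ) (hf ℓ)
  unfold pairRate
  split_ifs <;> positivity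

lemma abs_rateDiff_le_rateSum (ha : 0 ≤ a) (hb : 0 ≤ b) (hμ : ∀ ℓ, 0 ≤ μ ℓ) (hν : ∀ ℓ, 0 ≤ ν ℓ)
    {f : L → ℝ} (hf : ∀ ℓ, 0 ≤ f ℓ) : |rateDiff a b μ ν f| ≤ rateSum a b μ ν f := by
  refine (abs_sum_le_sum_abs _ _).trans (sum_le_sum fun ℓ _ => ?_)
  have haμ := mul_nonneg ha (hμ ℓ)
  have hbν := mul_nonneg hb (hν ℓ)
  rw [abs_mul, abs_of_nonneg (hf ℓ)]
  gcongr
  · exact hf ℓ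
  · exact abs_le.2 ⟨by linarith, by linarith⟩

lemma sum_pairs_mul_pairRate (f : L → ℝ) (σ : Fin n → Bool) {x : Fin n → ℝ} (hx : IsSignVec x) :
    ∑ p : Pairs n, x p.1.1 * x p.1.2 * pairRate a b μ ν f (σ p.1.1 == σ p.1.2) =
      (rateSum a b μ ν f * ((∑ u, x u) ^ 2 - n) +
        rateDiff a b μ ν f * ((∑ u, x u * signVec σ u) ^ 2 - n)) / 4 := by
  have hxσ := (hx.mul (isSignVec_signVec σ)).sum_pairs_mul
  simp only [Pi.mul_apply] at hxσ
  calc _ = rateSum a b μ ν f / 2 * ∑ p : Pairs n, x p.1.1 * x p.1.2 +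
        rateDiff a b μ ν f / 2 *
          ∑ p : Pairs n, x p.1.1 * signVec σ p.1.1 * (x p.1.2 * signVec σ p.1.2) := by
        rw [mul_sum, mul_sum, ← sum_add_distrib]
        exact sum_congr rfl fun p _ => by rw [pairRate_beq]; ring
    _ = _ := by rw [hx.sum_pairs_mul, hxσ]; ring

lemma sum_pairs_pairRate_le (ha : 0 ≤ a) (hb : 0 ≤ b) (hμ : ∀ ℓ, 0 ≤ μ ℓ) (hν : ∀ ℓ, 0 ≤ ν ℓ)
    {f : L → ℝ} (hf : ∀ ℓ, 0 ≤ f ℓ) (σ : Fin n → Bool) :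
    ∑ p : Pairs n, pairRate a b μ ν f (σ p.1.1 == σ p.1.2) ≤
      rateSum a b μ ν f / 4 * (n ^ 2 + (∑ u, signVec σ u) ^ 2) := by
  have sum_eq := sum_pairs_mul_pairRate (a := a) (b := b) (μ := μ) (ν := ν) f σ
    (x := 1) fun _ => Or.inl rfl
  simp only [Pi.one_apply, one_mul, sum_const, card_univ, Fintype.card_fin, nsmul_eq_mul,
    mul_one] at sum_eq
  obtain ⟨hneg, hpos⟩ := abs_le.1 (abs_rateDiff_le_rateSum ha hb hμ hν hf)
  rw [sum_eq]
  nlinarith [mul_le_mul_of_nonneg_right hpos (sq_nonneg (∑ u, signVec σ u)),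
    mul_le_mul_of_nonneg_right hneg (Nat.cast_nonneg n : (0 : ℝ) ≤ n)]

lemma one_sub_add_sum_mul_exp_le {q : ℝ} (hq : 0 ≤ q) (hμ : IsProbVec μ) {x : L → ℝ}
    (hx : ∀ ℓ, |x ℓ| ≤ 1) :
    1 - q + ∑ ℓ, q * μ ℓ * exp (x ℓ) ≤ exp (q * ∑ ℓ, μ ℓ * (x ℓ + x ℓ ^ 2)) :=
  calc 1 - q + ∑ ℓ, q * μ ℓ * exp (x ℓ)
      ≤ 1 - q + ∑ ℓ, q * μ ℓ * (1 + (x ℓ + x ℓ ^ 2)) := by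
        gcongr with ℓ
        · exact mul_nonneg hq (hμ.1 ℓ)
        · linarith [(abs_le.1 (abs_exp_sub_one_sub_id_le (hx ℓ))).2]
    _ = q * ∑ ℓ, μ ℓ * (x ℓ + x ℓ ^ 2) + 1 := by
        simp only [mul_one_add, sum_add_distrib, mul_assoc, ← mul_sum, hμ.2]; ring
    _ ≤ exp (q * ∑ ℓ, μ ℓ * (x ℓ + x ℓ ^ 2)) := add_one_le_exp _

lemma pairRate_smul_add_sq (c : ℝ) (f : L → ℝ) (same : Bool) :
    pairRate a b μ ν (c • f + (c • f) ^ 2) same =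
      c * pairRate a b μ ν f same + c ^ 2 * pairRate a b μ ν (f ^ 2) same := by
  have linear (ρ : L → ℝ) : ∑ ℓ, ρ ℓ * (c • f + (c • f) ^ 2) ℓ =
      c * ∑ ℓ, ρ ℓ * f ℓ + c ^ 2 * ∑ ℓ, ρ ℓ * (f ^ 2) ℓ := by
    simp only [mul_sum, ← sum_add_distrib, Pi.add_apply, Pi.smul_apply, Pi.pow_apply, smul_eq_mul]
    exact sum_congr rfl fun ℓ _ => by ring
  simp only [pairRate, linear]
  split_ifs <;> ring

lemma sum_sbmPairMass_mul_exp_le (ha : 0 ≤ a) (hb : 0 ≤ b) (hμ : IsProbVec μ) (hν : IsProbVec ν)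
    {x : L → ℝ} (hx : ∀ ℓ, |x ℓ| ≤ 1) (same : Bool) :
    ∑ o : Option L, sbmPairMass n a b μ ν same o * exp (o.elim 0 x) ≤
      exp (pairRate a b μ ν (x + x ^ 2) same / n) := by
  cases same
  · simpa [Fintype.sum_option, sbmPairMass, pairRate, div_mul_eq_mul_div] using
      one_sub_add_sum_mul_exp_le (q := b / n) (by positivity) hν hx
  · simpa [Fintype.sum_option, sbmPairMass, pairRate, div_mul_eq_mul_div] using
      one_sub_add_sum_mul_exp_le (q := a / n) (by positivity) hμ hx

lemma IsModel.sbmCondExp_exp_sum_le (h : IsModel n a b μ ν) {w : L → ℝ} (hw : ∀ ℓ, |w ℓ| ≤ 1)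
    {r : ℝ} (hr : r ≤ 1) (σ : Fin n → Bool) {c : Pairs n → ℝ} (hc : ∀ p, |c p| ≤ r) :
    sbmCondExp n a b μ ν σ (fun E => exp (∑ p, c p * (E p).elim 0 w)) ≤
      exp ((∑ p, c p * pairRate a b μ ν w (σ p.1.1 == σ p.1.2) +
        r ^ 2 * (rateSum a b μ ν (w ^ 2) / 4 * (n ^ 2 + (∑ u, signVec σ u) ^ 2))) / n) := by
  have hcw (p : Pairs n) (ℓ : L) : |(c p • w) ℓ| ≤ 1 := by
    simpa [abs_mul] using mul_le_one₀ ((hc p).trans hr) (abs_nonneg _) (hw ℓ)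
  have elim_smul (p : Pairs n) (o : Option L) : c p * o.elim 0 w = o.elim 0 (c p • w) := by
    cases o <;> simp
  have variance_le : ∑ p : Pairs n, c p ^ 2 * pairRate a b μ ν (w ^ 2) (σ p.1.1 == σ p.1.2) ≤
      r ^ 2 * (rateSum a b μ ν (w ^ 2) / 4 * (n ^ 2 + (∑ u, signVec σ u) ^ 2)) := by
    have w_sq_nonneg (ℓ : L) : 0 ≤ (w ^ 2) ℓ := sq_nonneg (w ℓ)
    refine le_trans ?_ (mul_le_mul_of_nonneg_left (sum_pairs_pairRate_le h.intra_nonneg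
      h.inter_nonneg h.intra_label.1 h.inter_label.1 w_sq_nonneg σ) (sq_nonneg r))
    rw [mul_sum]
    exact sum_le_sum fun p _ => mul_le_mul_of_nonneg_right
      (sq_le_sq' (abs_le.1 (hc p)).1 (abs_le.1 (hc p)).2) (pairRate_nonneg h.intra_nonneg
        h.inter_nonneg h.intra_label.1 h.inter_label.1 w_sq_nonneg _)
  calc sbmCondExp n a b μ ν σ (fun E => exp (∑ p, c p * (E p).elim 0 w))
      = ∏ p : Pairs n, ∑ o : Option L, sbmPairMass n a b μ ν (σ p.1.1 == σ p.1.2) o *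
          exp (o.elim 0 (c p • w)) := by
        simp_rw [← sbmCondExp_prod σ fun p o => exp (o.elim 0 (c p • w)), exp_sum, elim_smul]
    _ ≤ ∏ p : Pairs n, exp (pairRate a b μ ν (c p • w + (c p • w) ^ 2)
          (σ p.1.1 == σ p.1.2) / n) :=
        prod_le_prod (fun p _ => sum_nonneg fun o _ =>
          mul_nonneg (h.sbmPairMass_nonneg _ o) (exp_pos _).le) fun p _ =>
            sum_sbmPairMass_mul_exp_le h.intra_nonneg h.inter_nonneg h.intra_label h.inter_label
              (hcw p) _
    _ ≤ _ := by
        rw [← exp_sum, ← sum_div]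
        simp_rw [pairRate_smul_add_sq, sum_add_distrib]
        gcongr

end ExponentialMoments

section MinimumBisection

variable [Fintype L] {n : ℕ} {a b : ℝ} {μ ν w : L → ℝ}

/-- The event that every minimum bisection has positive overlap with the true types. -/
def correlatedEvent (n : ℕ) (w : L → ℝ) : Set ((Fin n → Bool) × EdgeConf n L) :=
  {x | ∀ y, IsMinBisection w x.2 y → 0 < overlap n (signVec x.1) y}

/-- The exponential rate at which the bisections orthogonal to the true types are jointly ruled out
by the Chernoff bound with parameter `r`, when the two types differ in number by at most `ε n`. -/
noncomputable def chernoffRate (a b : ℝ) (μ ν w : L → ℝ) (r ε : ℝ) : ℝ :=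
  r * rateDiff a b μ ν w / 8 * (1 - ε) ^ 2 -
    r ^ 2 * rateSum a b μ ν (w ^ 2) / 4 * (1 + ε ^ 2) - log 2

lemma IsModel.sbmCondExp_exp_cutWeight_sub_le (h : IsModel n a b μ ν) (hw : ∀ ℓ, |w ℓ| ≤ 1)
    {r : ℝ} (hr₀ : 0 ≤ r) (hr₁ : r ≤ 1) (σ : Fin n → Bool) {t y : Fin n → ℝ}
    (ht : IsBisection t) (hy : IsBisection y) :
    sbmCondExp n a b μ ν σ (fun E => exp (r * (cutWeight w E t - cutWeight w E y))) ≤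
      exp ((r * rateDiff a b μ ν w / 8 *
          ((∑ u, y u * signVec σ u) ^ 2 - (∑ u, t u * signVec σ u) ^ 2) +
        r ^ 2 * (rateSum a b μ ν (w ^ 2) / 4 * (n ^ 2 + (∑ u, signVec σ u) ^ 2))) / n) := by
  let c : Pairs n → ℝ := fun p => r * ((y p.1.1 * y p.1.2 - t p.1.1 * t p.1.2) / 2)
  have abs_c_le (p : Pairs n) : |c p| ≤ r := by
    rw [abs_mul, abs_of_nonneg hr₀]
    refine mul_le_of_le_one_right hr₀ ?_
    rcases ht.1 p.1.1 with h₁ | h₁ <;> rcases ht.1 p.1.2 with h₂ | h₂ <;>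
      rcases hy.1 p.1.1 with h₃ | h₃ <;> rcases hy.1 p.1.2 with h₄ | h₄ <;>
      norm_num [h₁, h₂, h₃, h₄]
  have exponent_eq (E : EdgeConf n L) :
      r * (cutWeight w E t - cutWeight w E y) = ∑ p, c p * (E p).elim 0 w := by
    rw [cutWeight_eq_sum w E ht.1, cutWeight_eq_sum w E hy.1, ← sum_sub_distrib, mul_sum]
    exact sum_congr rfl fun p _ => by ring
  have mean_eq : ∑ p, c p * pairRate a b μ ν w (σ p.1.1 == σ p.1.2) =
      r * rateDiff a b μ ν w / 8 *
        ((∑ u, y u * signVec σ u) ^ 2 - (∑ u, t u * signVec σ u) ^ 2) := by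
    simp_rw [c, mul_assoc, div_mul_eq_mul_div, sub_mul, ← mul_sum, ← sum_div, sum_sub_distrib,
      sum_pairs_mul_pairRate w σ ht.1, sum_pairs_mul_pairRate w σ hy.1, ht.2, hy.2]
    ring
  simp_rw [exponent_eq, ← mean_eq]
  exact h.sbmCondExp_exp_sum_le hw hr₁ σ abs_c_le

lemma IsModel.sbmCondProb_exists_orthogonal_le (h : IsModel n a b μ ν) (hw : ∀ ℓ, |w ℓ| ≤ 1)
    {r : ℝ} (hr₀ : 0 ≤ r) (hr₁ : r ≤ 1) (σ : Fin n → Bool) {t : Fin n → ℝ} (ht : IsBisection t) :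
    sbmCondProb n a b μ ν σ {E | ∃ y, IsMinBisection w E y ∧ ∑ u, y u * signVec σ u = 0} ≤
      2 ^ n * exp ((r ^ 2 * (rateSum a b μ ν (w ^ 2) / 4 * (n ^ 2 + (∑ u, signVec σ u) ^ 2)) -
        r * rateDiff a b μ ν w / 8 * (∑ u, t u * signVec σ u) ^ 2) / n) := by
  classical
  let I : Finset (Fin n → Bool) :=
    {τ | IsBisection (signVec τ) ∧ ∑ u, signVec τ u * signVec σ u = 0}
  let gain (τ : Fin n → Bool) (E : EdgeConf n L) : ℝ :=
    exp (r * (cutWeight w E t - cutWeight w E (signVec τ)))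
  have one_le_sum_gain (E : EdgeConf n L)
      (hE : ∃ y, IsMinBisection w E y ∧ ∑ u, y u * signVec σ u = 0) :
      1 ≤ ∑ τ ∈ I, gain τ E := by
    obtain ⟨y, ⟨hy, hmin⟩, hyσ⟩ := hE
    obtain ⟨τ, rfl⟩ := hy.1.exists_signVec_eq
    have hτ : τ ∈ I := by simp [I, hy, hyσ]
    exact (one_le_exp (mul_nonneg hr₀ (sub_nonneg.2 (hmin t ht)))).trans
      (single_le_sum (f := fun τ => gain τ E) (fun _ _ => (exp_pos _).le) hτ)
  calc _ ≤ sbmCondExp n a b μ ν σ (fun E => ∑ τ ∈ I, gain τ E) :=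
        h.sbmCondProb_le_sbmCondExp σ (fun _ => sum_nonneg fun _ _ => (exp_pos _).le)
          one_le_sum_gain
    _ = ∑ τ ∈ I, sbmCondExp n a b μ ν σ (gain τ) := sbmCondExp_sum σ I gain
    _ ≤ ∑ τ ∈ I, exp ((r ^ 2 * (rateSum a b μ ν (w ^ 2) / 4 *
          (n ^ 2 + (∑ u, signVec σ u) ^ 2)) -
            r * rateDiff a b μ ν w / 8 * (∑ u, t u * signVec σ u) ^ 2) / n) := by
        refine sum_le_sum fun τ hτ => ?_
        obtain ⟨hτ, hτσ⟩ := (mem_filter.1 hτ).2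
        refine (h.sbmCondExp_exp_cutWeight_sub_le hw hr₀ hr₁ σ ht hτ).trans_eq ?_
        rw [hτσ]
        ring_nf
    _ ≤ _ := by
        rw [sum_const, nsmul_eq_mul]
        gcongr
        exact_mod_cast (card_le_univ I).trans_eq (by simp)

lemma IsModel.sbmCondProb_exists_orthogonal_le_exp_chernoffRate (h : IsModel n a b μ ν)
    (hn₀ : 0 < n) (hn : Even n) (hw : ∀ ℓ, |w ℓ| ≤ 1) {r ε : ℝ} (hr₀ : 0 ≤ r) (hr₁ : r ≤ 1)
    (hΔ : 0 ≤ rateDiff a b μ ν w) (hε : ε ≤ 1) (σ : Fin n → Bool)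
    (hσ : |∑ u, signVec σ u| ≤ ε * n) :
    sbmCondProb n a b μ ν σ {E | ∃ y, IsMinBisection w E y ∧ ∑ u, y u * signVec σ u = 0} ≤
      exp (-chernoffRate a b μ ν w r ε) ^ n := by
  have hn' : (0 : ℝ) < n := Nat.cast_pos.2 hn₀
  obtain ⟨t, ht, htσ⟩ := (isSignVec_signVec σ).exists_isBisection_sub_abs_sum_le hn
  have S_nonneg : 0 ≤ rateSum a b μ ν (w ^ 2) := (abs_nonneg _).trans
    (abs_rateDiff_le_rateSum h.intra_nonneg h.inter_nonneg h.intra_label.1 h.inter_label.1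
      fun ℓ => sq_nonneg (w ℓ))
  have agreement : ((1 - ε) * n) ^ 2 ≤ (∑ u, t u * signVec σ u) ^ 2 :=
    pow_le_pow_left₀ (mul_nonneg (sub_nonneg.2 hε) hn'.le) (by linarith) 2
  have imbalance : (∑ u, signVec σ u) ^ 2 ≤ (ε * n) ^ 2 :=
    sq_le_sq' (abs_le.1 hσ).1 (abs_le.1 hσ).2
  calc _ ≤ 2 ^ n * exp ((r ^ 2 * (rateSum a b μ ν (w ^ 2) / 4 * (n ^ 2 + (∑ u, signVec σ u) ^ 2)) -
        r * rateDiff a b μ ν w / 8 * (∑ u, t u * signVec σ u) ^ 2) / n) :=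
        h.sbmCondProb_exists_orthogonal_le hw hr₀ hr₁ σ ht
    _ ≤ 2 ^ n * exp ((r ^ 2 * (rateSum a b μ ν (w ^ 2) / 4 * (n ^ 2 + (ε * n) ^ 2)) -
        r * rateDiff a b μ ν w / 8 * ((1 - ε) * n) ^ 2) / n) := by
        gcongr
    _ = exp (log 2) ^ n * exp (n * (-chernoffRate a b μ ν w r ε - log 2)) := by
        rw [exp_log two_pos, chernoffRate]
        congr 2
        field
    _ = exp (-chernoffRate a b μ ν w r ε) ^ n := by
        rw [← exp_nat_mul, ← exp_nat_mul, ← exp_add]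
        ring_nf

lemma IsModel.sbmProb_compl_correlatedEvent_le (h : IsModel n a b μ ν) (hn₀ : 0 < n) (hn : Even n)
    (hw : ∀ ℓ, |w ℓ| ≤ 1) {r ε : ℝ} (hr₀ : 0 ≤ r) (hr₁ : r ≤ 1)
    (hΔ : 0 ≤ rateDiff a b μ ν w) (hε₀ : 0 < ε) (hε₁ : ε ≤ 1) :
    sbmProb n a b μ ν (correlatedEvent n w)ᶜ ≤
      1 / (ε ^ 2 * n) + exp (-chernoffRate a b μ ν w r ε) ^ n := by
  refine h.sbmProb_le_of_sbmCondProb_le hn₀ hε₀ (by positivity) fun σ hσ => ?_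
  have compl_eq : {E | (σ, E) ∈ (correlatedEvent n w)ᶜ} =
      {E | ∃ y, IsMinBisection w E y ∧ ∑ u, y u * signVec σ u = 0} := by
    ext E
    simp only [correlatedEvent, Set.mem_compl_iff, Set.mem_ofPred_eq, not_forall, exists_prop]
    exact exists_congr fun y => and_congr_right fun hy => by
      rw [(isSignVec_signVec σ).overlap_pos_iff hn₀ hy.1.1, not_not]
  rw [compl_eq]
  exact h.sbmCondProb_exists_orthogonal_le_exp_chernoffRate hn₀ hn hw hr₀ hr₁ hΔ hε₁ σ hσ

lemma eventually_isModel (ha : 0 ≤ a) (hb : 0 ≤ b) (hμ : IsProbVec μ) (hν : IsProbVec ν) :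
    ∀ᶠ n in atTop, IsModel n a b μ ν := by
  filter_upwards [tendsto_natCast_atTop_atTop.eventually_ge_atTop a,
    tendsto_natCast_atTop_atTop.eventually_ge_atTop b] with n han hbn
  exact ⟨ha, han, hb, hbn, hμ, hν⟩

lemma exists_chernoffRate_pos {r : ℝ} (hr : 0 < chernoffRate a b μ ν w r 0) :
    ∃ ε, 0 < ε ∧ ε ≤ 1 ∧ 0 < chernoffRate a b μ ν w r ε := by
  have continuous_rate : Continuous (chernoffRate a b μ ν w r) := by
    unfold chernoffRate
    fun_prop
  have eventually_pos := continuous_rate.continuousAt.eventually (lt_mem_nhds hr)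
  obtain ⟨ε, hε, hε₀, hε₁⟩ := ((eventually_pos.filter_mono nhdsWithin_le_nhds).and
    (Ioc_mem_nhdsGT one_pos)).exists
  exact ⟨ε, hε₀, hε₁, hε⟩

lemma tendsto_sbmProb_correlatedEvent (ha : 0 ≤ a) (hb : 0 ≤ b) (hμ : IsProbVec μ)
    (hν : IsProbVec ν) (hw : ∀ ℓ, |w ℓ| ≤ 1) {r : ℝ} (hr₀ : 0 ≤ r) (hr₁ : r ≤ 1)
    (hΔ : 0 ≤ rateDiff a b μ ν w) (hr : 0 < chernoffRate a b μ ν w r 0) :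
    Tendsto (fun m => sbmProb (2 * m) a b μ ν (correlatedEvent (2 * m) w)) atTop (nhds 1) := by
  obtain ⟨ε, hε₀, hε₁, hε⟩ := exists_chernoffRate_pos hr
  have two_mul_tendsto : Tendsto (fun m : ℕ => 2 * m) atTop atTop :=
    tendsto_id.const_mul_atTop' two_pos
  have bound_tendsto : Tendsto (fun n : ℕ =>
      1 / (ε ^ 2 * n) + exp (-chernoffRate a b μ ν w r ε) ^ n) atTop (nhds 0) := by
    have exp_lt_one := exp_lt_one_iff.2 (neg_neg_of_pos hε)
    simpa using
      ((tendsto_natCast_atTop_atTop.const_mul_atTop (sq_pos_of_pos hε₀)).const_div_atTop 1).add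
        (tendsto_pow_atTop_nhds_zero_of_lt_one (exp_pos _).le exp_lt_one)
  have compl_tendsto : Tendsto (fun m => sbmProb (2 * m) a b μ ν (correlatedEvent (2 * m) w)ᶜ)
      atTop (nhds 0) := by
    have model := two_mul_tendsto.eventually (eventually_isModel ha hb hμ hν)
    refine squeeze_zero' (model.mono fun m hm => hm.sbmProb_nonneg _) ?_
      (bound_tendsto.comp two_mul_tendsto)
    filter_upwards [model, eventually_gt_atTop 0] with m hm hm₀
    exact hm.sbmProb_compl_correlatedEvent_le (by lia) (even_two_mul m) hw hr₀ hr₁ hΔ hε₀ hε₁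
  simp_rw [sbmProb_eq_one_sub_compl hμ hν (correlatedEvent _ w)]
  simpa using compl_tendsto.const_sub 1

lemma exists_chernoffRate_zero_pos (hS : 4 * log 2 ≤ rateSum a b μ ν (w ^ 2))
    (hgap : √(64 * log 2) < rateDiff a b μ ν w / √(rateSum a b μ ν (w ^ 2))) :
    ∃ r, 0 ≤ r ∧ r ≤ 1 ∧ 0 < chernoffRate a b μ ν w r 0 := by
  have log_pos : 0 < log 2 := log_pos one_lt_two
  set S := rateSum a b μ ν (w ^ 2) with S_def
  set Δ := rateDiff a b μ ν w with Δ_def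
  have S_pos : 0 < S := by linarith
  refine ⟨√(4 * log 2) / √S, by positivity, div_le_one_of_le₀ (sqrt_le_sqrt hS) (sqrt_nonneg S), ?_⟩
  have noise_eq : (√(4 * log 2) / √S) ^ 2 * S = 4 * log 2 := by
    rw [div_pow, sq_sqrt (by positivity), sq_sqrt S_pos.le, div_mul_cancel₀ _ S_pos.ne']
  have lt_signal : 16 * log 2 < √(4 * log 2) / √S * Δ :=
    calc 16 * log 2 = √(4 * log 2) * √(64 * log 2) := by
          rw [← sqrt_mul (by positivity), eq_comm, sqrt_eq_iff_mul_self_eq_of_pos (by positivity)]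
          ring
      _ < √(4 * log 2) * (Δ / √S) := by gcongr
      _ = √(4 * log 2) / √S * Δ := by ring
  rw [chernoffRate, ← S_def, ← Δ_def, noise_eq]
  linarith

theorem min_bisection_correlated_general (ha : 0 ≤ a) (hb : 0 ≤ b) (hμ : IsProbVec μ)
    (hν : IsProbVec ν) (hw : ∀ ℓ, |w ℓ| ≤ 1) (hS : 4 * log 2 ≤ rateSum a b μ ν (w ^ 2))
    (hgap : √(64 * log 2) < rateDiff a b μ ν w / √(rateSum a b μ ν (w ^ 2))) :
    Tendsto (fun m => sbmProb (2 * m) a b μ ν (correlatedEvent (2 * m) w)) atTop (nhds 1) := by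
  obtain ⟨r, hr₀, hr₁, hr⟩ := exists_chernoffRate_zero_pos hS hgap
  have hΔ : 0 ≤ rateDiff a b μ ν w := by
    by_contra! hΔ
    exact hgap.not_ge ((div_nonpos_of_nonpos_of_nonneg hΔ.le (sqrt_nonneg _)).trans (sqrt_nonneg _))
  exact tendsto_sbmProb_correlatedEvent ha hb hμ hν hw hr₀ hr₁ hΔ hr

end MinimumBisection

/-- **Theorem (Minimum bisection, Theorem 1).**
Under the labeled SBM `𝒢(n, a/n, b/n, μ, ν)` with `n` even and a weight function
`w : 𝓛 → [-1,1]`, under the stated technical conditions and the gap condition,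
a.a.s. every minimizer of the weighted minimum bisection has positive overlap
with the true type assignment. -/
theorem min_bisection_correlated
    {L : Type*} [Fintype L] (a b : ℝ) (ha : 0 < a) (hb : 0 < b)
    (μ ν : L → ℝ) (hμ : IsProbVec μ) (hν : IsProbVec ν)
    (w : L → ℝ) (hw : ∀ ℓ, -1 ≤ w ℓ ∧ w ℓ ≤ 1)
    (htech1 : 8 * Real.log 2 < ∑ ℓ, a * μ ℓ * w ℓ ^ 2)
    (htech2 : 8 * Real.log 2 < ∑ ℓ, b * ν ℓ * w ℓ ^ 2)
    (hgap : Real.sqrt (128 * Real.log 2) <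
      (∑ ℓ, (a * μ ℓ - b * ν ℓ) * w ℓ) /
        Real.sqrt (∑ ℓ, (a * μ ℓ + b * ν ℓ) * w ℓ ^ 2)) :
    Filter.Tendsto (fun m : ℕ =>
      sbmProb (2 * m) a b μ ν
        {x | ∀ σh : Fin (2 * m) → ℝ, IsSignVec σh → (∑ u, σh u) = 0 →
          (∀ σ' : Fin (2 * m) → ℝ, IsSignVec σ' → (∑ u, σ' u) = 0 →
            cutWeight w x.2 σh ≤ cutWeight w x.2 σ') →
          0 < overlap (2 * m) (signVec x.1) σh})
      Filter.atTop (nhds 1) := by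
  have hS : ∑ ℓ, a * μ ℓ * w ℓ ^ 2 + ∑ ℓ, b * ν ℓ * w ℓ ^ 2 = rateSum a b μ ν (w ^ 2) := by
    simp [rateSum, add_mul, sum_add_distrib]
  have hlog : 0 < log 2 := log_pos one_lt_two
  simpa only [correlatedEvent, IsMinBisection, IsBisection, and_imp] using
    min_bisection_correlated_general ha.le hb.le hμ hν (fun ℓ => abs_le.2 (hw ℓ))
      (by linarith) ((sqrt_le_sqrt (by linarith)).trans_lt hgap)

end LSBM
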